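/- arXiv:1404.5019 — 3 statements merged into one kernel-verified Lean document; each statement's English description precedes it below -/
import Mathlib

section
/- (Theorem 1) Let d₁, …, d_{M_s} be real numbers (positions of the active antennas in wavelengths) and let θ₁, …, θ_Q ∈ (−π/2, π/2] be Q distinct angles. Define the M_s² × Q complex matrix G whose entry indexed by the pair (i, j) ∈ {1,…,M_s}² and column q ∈ {1,…,Q} is exp(2πi·(d_i − d_j)·sin θ_q). Suppose there exist a real number d with 0 < d ≤ 1/2, a real number d̄, and an integer N_v ≥ Q such that for every k ∈ {0, 1, …, N_v − 1} there exist indices i, j ∈ {1,…,M_s} with d_i − d_j = d̄ + k·d. Then G has full column rank Q, i.e., rank G = Q. -/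
/-- **Theorem 1.** If the antenna-position difference set `{dᵢ − dⱼ}` contains an
arithmetic sequence of `N_v ≥ Q` terms with common difference `0 < d ≤ 1/2`, and the
`Q` investigated angles are distinct and lie in `(-π/2, π/2]`, then the Khatri-Rao
matrix `G = B* ⊙ B`, with entries `G (i,j) q = exp(2πi(dᵢ − dⱼ)sin θ_q)`, has full
column rank `Q`. -/
theorem khatriRao_full_column_rank_of_arith_diff
    (Ms Q : ℕ) (dd : Fin Ms → ℝ) (θ : Fin Q → ℝ)
    (hθmem : ∀ q, θ q ∈ Set.Ioc (-(Real.pi / 2)) (Real.pi / 2))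
    (hθinj : Function.Injective θ)
    (d dbar : ℝ) (hd0 : 0 < d) (hd : d ≤ 1 / 2)
    (Nv : ℕ) (hNv : Q ≤ Nv)
    (harith : ∀ k : ℕ, k < Nv → ∃ i j : Fin Ms, dd i - dd j = dbar + k * d)
    (G : Matrix (Fin Ms × Fin Ms) (Fin Q) ℂ)
    (hG : ∀ i j q, G (i, j) q
        = Complex.exp (2 * Real.pi * Complex.I * (dd i - dd j) * Real.sin (θ q))) :
    G.rank = Q := by
  have hsin : ∀ q, -1 < Real.sin (θ q) ∧ Real.sin (θ q) ≤ 1 := by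
    intro q
    refine ⟨?_, Real.sin_le_one _⟩
    have h := Real.strictMonoOn_sin (a := -(Real.pi / 2)) (b := θ q)
      ⟨le_refl _, by linarith [Real.pi_pos]⟩ ⟨(hθmem q).1.le, (hθmem q).2⟩ (hθmem q).1
    simpa using h
  let z : Fin Q → ℂ := fun q => Complex.exp (2 * Real.pi * Complex.I * d * Real.sin (θ q))
  have hz : Function.Injective z := by
    intro p q hpq
    obtain ⟨n, hn⟩ := Complex.exp_eq_exp_iff_exists_int.1 hpq
    have h1 : (2 * Real.pi * Complex.I) * ((d * Real.sin (θ p) : ℂ))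
        = (2 * Real.pi * Complex.I) * (d * Real.sin (θ q) + n) := by
      linear_combination hn
    have h2 := mul_left_cancel₀ Complex.two_pi_I_ne_zero h1
    have h3 : d * Real.sin (θ p) = d * Real.sin (θ q) + n := by exact_mod_cast h2
    have hp := hsin p
    have hq := hsin q
    have h4 : (n : ℝ) < 1 := by nlinarith
    have h5 : (-1 : ℝ) < n := by nlinarith
    have h6 : n = 0 := by
      have : n < 1 := by exact_mod_cast h4
      have : -1 < n := by exact_mod_cast h5
      omega
    rw [h6, Int.cast_zero, add_zero] at h3
    have h7 := mul_left_cancel₀ hd0.ne' h3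
    exact hθinj (Real.injOn_sin ⟨(hθmem p).1.le, (hθmem p).2⟩ ⟨(hθmem q).1.le, (hθmem q).2⟩ h7)
  have hli : LinearIndependent ℂ (Matrix.transpose G).row := by
    rw [Fintype.linearIndependent_iff]
    intro g hg
    let w : Fin Q → ℂ := fun q =>
      g q * Complex.exp (2 * Real.pi * Complex.I * dbar * Real.sin (θ q))
    have hw : w = 0 := by
      refine Matrix.eq_zero_of_forall_pow_sum_mul_pow_eq_zero (f := z) hz ?_
      intro k
      obtain ⟨i, j, hij⟩ := harith k (lt_of_lt_of_le k.2 hNv)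
      have h := congrFun hg (i, j)
      rw [Finset.sum_apply] at h
      rw [Pi.zero_apply] at h
      rw [← h]
      refine Finset.sum_congr rfl fun q _ => ?_
      have hij' : (dd i : ℂ) - dd j = dbar + ((k : ℕ) : ℂ) * d := by exact_mod_cast hij
      have hGq : (g q • (Matrix.transpose G).row q) (i, j) = g q * G (i, j) q := rfl
      rw [hGq, hG, hij']
      simp only [w, z]
      rw [← Complex.exp_nat_mul, mul_assoc, ← Complex.exp_add]
      congr 2
      ring
    intro q
    have := congrFun hw q
    simpa [w, Complex.exp_ne_zero] using this
  rw [← Matrix.rank_transpose, hli.rank_matrix, Fintype.card_fin]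
end

section
/- (Theorem 2) Let Q be a positive integer, let d₁, …, d_{M_s} be real numbers, and define the investigated angles θ_q = arcsin((2/Q)·(q − 1 − ⌈(Q−1)/2⌉)) for q = 1, …, Q. Define the M_s² × Q complex matrix G whose entry indexed by the pair (i, j) ∈ {1,…,M_s}² and column q is exp(2πi·(d_i − d_j)·sin θ_q) = exp(i·(4π/Q)·(d_i − d_j)·(q − 1 − ⌈(Q−1)/2⌉)). If the set {(d_i − d_j) mod (Q/2) : i, j ∈ {1,…,M_s}} contains at least Q distinct values, then G has full column rank Q. -/
/-- **Theorem 2.** With the inverse sinusoidal angular grid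
`θ_q = arcsin((2/Q)(q − 1 − ⌈(Q−1)/2⌉))`, if the antenna-position differences
`dᵢ − dⱼ` take at least `Q` distinct values modulo `Q/2`, then the Khatri-Rao
matrix `G`, with entries `G (i,j) q = exp(2πi(dᵢ − dⱼ)sin θ_q)`, has full column
rank `Q`. -/
theorem khatriRao_full_column_rank_of_distinct_mod
    (Ms Q : ℕ) (hQ : 0 < Q) (dd : Fin Ms → ℝ) (θ : Fin Q → ℝ)
    (hθ : ∀ q : Fin Q,
      θ q = Real.arcsin ((2 / Q) * ((q : ℝ) - (⌈((Q : ℝ) - 1) / 2⌉ : ℤ))))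
    (G : Matrix (Fin Ms × Fin Ms) (Fin Q) ℂ)
    (hG : ∀ i j q, G (i, j) q
        = Complex.exp (2 * Real.pi * Complex.I * (dd i - dd j) * Real.sin (θ q)))
    (hdiff : ∃ p : Fin Q → Fin Ms × Fin Ms, ∀ q q' : Fin Q, q ≠ q' →
      ¬ AddCommGroup.ModEq ((Q : ℝ) / 2)
          (dd (p q).1 - dd (p q).2) (dd (p q').1 - dd (p q').2)) :
    G.rank = Q := by
  obtain ⟨p, hp⟩ := hdiff
  set c : ℤ := ⌈((Q : ℝ) - 1) / 2⌉ with hc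
  have hQR : (0 : ℝ) < Q := by exact_mod_cast hQ
  have hQC : (Q : ℂ) ≠ 0 := by exact_mod_cast hQ.ne'
  have hpi : (Real.pi : ℂ) ≠ 0 := by exact_mod_cast Real.pi_ne_zero
  have hc1 : ((Q : ℝ) - 1) / 2 ≤ c := Int.le_ceil _
  have hc2 : (c : ℝ) ≤ Q / 2 := by
    have h : (c : ℝ) < ((Q : ℝ) - 1) / 2 + 1 := Int.ceil_lt_add_one _
    have h2 : ((2 * c : ℤ) : ℝ) < ((Q + 1 : ℤ) : ℝ) := by push_cast; linarith
    have h3 : 2 * c ≤ (Q : ℤ) := by have := Int.cast_lt.mp h2; omega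
    have h4 : ((2 * c : ℤ) : ℝ) ≤ ((Q : ℤ) : ℝ) := by exact_mod_cast h3
    push_cast at h4; linarith
  have hsin : ∀ q : Fin Q, Real.sin (θ q) = (2 / Q) * ((q : ℝ) - c) := by
    intro q
    have hq : (q : ℝ) + 1 ≤ Q := by exact_mod_cast q.2
    have hq0 : (0 : ℝ) ≤ (q : ℝ) := by positivity
    rw [hθ q, Real.sin_arcsin]
    · rw [div_mul_eq_mul_div, le_div_iff₀ hQR]; linarith
    · rw [div_mul_eq_mul_div, div_le_iff₀ hQR]; linarith
  let x : Fin Q → ℂ := fun k =>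
    Complex.exp (4 * Real.pi * Complex.I / Q * (dd (p k).1 - dd (p k).2))
  have hx : Function.Injective x := by
    intro k l hkl
    by_contra hne
    obtain ⟨n, hn⟩ := Complex.exp_eq_exp_iff_exists_int.mp hkl
    apply hp k l hne
    have hn' : ((dd (p k).1 - dd (p k).2 : ℝ) : ℂ)
        = ((dd (p l).1 - dd (p l).2 + n * (Q / 2) : ℝ) : ℂ) := by
      have h4 : (4 * Real.pi * Complex.I / Q : ℂ) ≠ 0 := by
        simp [hQC, hpi]
      apply mul_left_cancel₀ h4
      push_cast
      rw [hn]
      field_simp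
      ring
    have hn'' := Complex.ofReal_injective hn'
    rw [AddCommGroup.modEq_iff_zsmul]
    refine ⟨-n, ?_⟩
    rw [hn'']
    simp
  have hsub : G.submatrix p id
      = Matrix.diagonal (fun k => x k ^ (-c)) * Matrix.vandermonde x := by
    ext k q
    rw [Matrix.diagonal_mul, Matrix.vandermonde_apply, Matrix.submatrix_apply, id]
    have := hG (p k).1 (p k).2 q
    rw [Prod.mk.eta] at this
    rw [this, hsin]
    simp only [x]
    rw [← Complex.exp_int_mul, ← Complex.exp_nat_mul, ← Complex.exp_add]
    congr 1
    push_cast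
    field_simp
    ring
  have hdet : IsUnit (G.submatrix p id) := by
    rw [Matrix.isUnit_iff_isUnit_det, hsub, Matrix.det_mul, Matrix.det_diagonal, isUnit_iff_ne_zero]
    refine mul_ne_zero ?_ (Matrix.det_vandermonde_ne_zero_iff.mpr hx)
    exact Finset.prod_ne_zero_iff.mpr fun k _ => zpow_ne_zero _ (Complex.exp_ne_zero _)
  have hr := Matrix.rank_of_isUnit _ hdet
  rw [Fintype.card_fin] at hr
  refine le_antisymm (by simpa using G.rank_le_card_width) ?_
  exact hr.symm.le.trans (Matrix.rank_submatrix_le G p id)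
end

section
/- Let N ≥ 2 and let S ⊆ {0, 1, …, N−1} be a set of row indices such that for every k ∈ {0, 1, …, N−1} there exist elements i, j ∈ S with i − j = k (i.e., S is a length-(N−1) sparse ruler). Let C be the |S| × N selection matrix formed by the rows of the identity matrix I_N whose indices lie in S, and let T be the N² × (2N−1) repetition matrix whose i-th row (1 ≤ i ≤ N²) equals the (((i−1+(N−2)⌊(i−1)/N⌋) mod (2N−1)) + 1)-th row of I_{2N−1}. Then the |S|² × (2N−1) matrix R = (C ⊗ C)·T has full column rank 2N−1. -/
/-- If `S ⊆ {0, …, N−1}` is a length-`(N−1)` sparse ruler, `C` is the selection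
matrix formed by the rows of `I_N` indexed by `S`, and `T` is the `N² × (2N−1)`
repetition matrix whose `i`-th row is the `(((i−1+(N−2)⌊(i−1)/N⌋) mod (2N−1)) + 1)`-th
row of `I_{2N−1}`, then `R = (C ⊗ C)·T` has full column rank `2N−1`. -/
theorem sparse_ruler_system_matrix_full_column_rank (N : ℕ) (hN : 2 ≤ N)
    (S : Finset (Fin N))
    (hS : ∀ k : ℕ, k < N → ∃ i ∈ S, ∃ j ∈ S, (i : ℕ) = (j : ℕ) + k)
    (C : Matrix {i : Fin N // i ∈ S} (Fin N) ℝ)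
    (hC : ∀ (u : {i : Fin N // i ∈ S}) (j : Fin N), C u j = if j = u.1 then 1 else 0)
    (T : Matrix (Fin N × Fin N) (Fin (2 * N - 1)) ℝ)
    (hT : ∀ (p : Fin N × Fin N) (j : Fin (2 * N - 1)),
      T p j = if (j : ℕ) =
          ((p.2.val * N + p.1.val) + (N - 2) * ((p.2.val * N + p.1.val) / N)) % (2 * N - 1)
        then 1 else 0) :
    ((Matrix.kroneckerMap (· * ·) C C) * T).rank = 2 * N - 1 := by
  have hdiv : ∀ a b : Fin N, (b.val * N + a.val) / N = b.val := by
    intro a b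
    rw [Nat.add_comm, Nat.add_mul_div_right _ _ (by omega), Nat.div_eq_of_lt a.2, Nat.zero_add]
  have hR : ∀ (u v : {i : Fin N // i ∈ S}) (j : Fin (2 * N - 1)),
      ((Matrix.kroneckerMap (· * ·) C C) * T) (u, v) j = T (u.1, v.1) j := by
    intro u v j
    rw [Matrix.mul_apply, Finset.sum_eq_single (u.1, v.1)]
    · simp [Matrix.kroneckerMap_apply, hC]
    · rintro ⟨a, b⟩ _ hab
      simp only [Matrix.kroneckerMap_apply, hC]
      by_cases h1 : a = u.1
      · by_cases h2 : b = v.1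
        · exact absurd (by rw [h1, h2]) hab
        · simp [h2]
      · simp [h1]
    · intro h
      exact absurd (Finset.mem_univ _) h
  have hex : ∀ j : Fin (2 * N - 1), ∃ p : {i : Fin N // i ∈ S} × {i : Fin N // i ∈ S},
      ((p.2.1.val * N + p.1.1.val) + (N - 2) * ((p.2.1.val * N + p.1.1.val) / N)) % (2 * N - 1)
        = j.val := by
    intro j
    obtain ⟨M, rfl⟩ : ∃ M, N = M + 2 := ⟨N - 2, by omega⟩
    have e : 2 * (M + 2) - 1 = 2 * M + 3 := by omega
    have hj := j.2
    by_cases h : j.val < M + 2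
    · obtain ⟨a, ha, b, hb, hab⟩ := hS j.val h
      refine ⟨(⟨a, ha⟩, ⟨b, hb⟩), ?_⟩
      simp only [hdiv]
      have : b.val * (M + 2) + a.val + (M + 2 - 2) * b.val = j.val + (2 * M + 3) * b.val := by
        rw [hab, Nat.add_sub_cancel]; ring
      rw [this, ← e, Nat.add_mul_mod_self_left, Nat.mod_eq_of_lt (by omega)]
    · obtain ⟨b, hb, a, ha, hab⟩ := hS (2 * M + 3 - j.val) (by omega)
      refine ⟨(⟨a, ha⟩, ⟨b, hb⟩), ?_⟩
      simp only [hdiv]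
      obtain ⟨c, hc⟩ : ∃ c, b.val = c + 1 := ⟨b.val - 1, by omega⟩
      have : b.val * (M + 2) + a.val + (M + 2 - 2) * b.val = j.val + (2 * M + 3) * c := by
        have h3 : a.val + 2 * M + 3 = j.val + c + 1 := by omega
        rw [Nat.add_sub_cancel, hc]
        linarith [h3, Nat.mul_comm c M, mul_add c M 2]
      rw [this, ← e, Nat.add_mul_mod_self_left, Nat.mod_eq_of_lt (by omega)]
  choose f hf using hex
  apply le_antisymm
  · simpa using Matrix.rank_le_card_width ((Matrix.kroneckerMap (· * ·) C C) * T)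
  · have h1 : (Matrix.of fun (i : Fin (2 * N - 1)) p => if p = f i then (1 : ℝ) else 0) *
        ((Matrix.kroneckerMap (· * ·) C C) * T) = 1 := by
      ext i j
      rw [Matrix.mul_apply]
      simp only [Matrix.of_apply, ite_mul, one_mul, zero_mul, Finset.sum_ite_eq',
        Finset.mem_univ, if_true, Finset.sum_ite_eq]
      rw [← Prod.mk.eta (p := f i), hR, hT]
      simp only [hf, Matrix.one_apply, Fin.ext_iff, eq_comm]
    have h2 := Matrix.rank_mul_le_right
      (Matrix.of fun (i : Fin (2 * N - 1)) p => if p = f i then (1 : ℝ) else 0)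
      ((Matrix.kroneckerMap (· * ·) C C) * T)
    rw [h1, Matrix.rank_one, Fintype.card_fin] at h2
    exact h2
end
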